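/- Let Ω ⊂ ℝⁿ be a bounded Lipschitz domain, let f ∈ C²([0,∞)) be strictly convex with f(0) = f'(0) = 0, satisfying the linear growth condition νt − L ≤ f(t) ≤ L(t+1) and the bound f''(t) ≤ L(1+t)⁻¹ for all t ≥ 0, and let T₀ ∈ W^{2,∞}(Ω;ℝ^{N×n}) satisfy ‖T₀‖_{L^∞(Ω;ℝ^{N×n})} < f^∞(1). Let u_k ∈ W^{1,2}(Ω;ℝ^N) be the minimisers of 𝔉_k with (u_k)_Ω = 0. Then there exist E ∈ L¹(Ω;ℝ^{N×n}) and a subsequence of (u_k) (not relabelled) such that ∇u_k converges to E in the biting sense weakly in L¹(Ω;ℝ^{N×n}) and ∇u_k → E ℒⁿ-almost everywhere in Ω as k → ∞. -/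

import Mathlib

open MeasureTheory Filter Topology Set
open scoped ENNReal RealInnerProductSpace

noncomputable section

/-- Euclidean space `ℝⁿ`. -/
abbrev EVec (n : ℕ) := EuclideanSpace ℝ (Fin n)

/-- Frobenius inner product of two "matrices". -/
def mdot {ι κ : Type*} [Fintype ι] [Fintype κ] (A B : ι → κ → ℝ) : ℝ :=
  ∑ a, ∑ i, A a i * B a i

/-- Frobenius norm. -/
noncomputable def mnorm {ι κ : Type*} [Fintype ι] [Fintype κ] (A : ι → κ → ℝ) : ℝ :=
  Real.sqrt (mdot A A)

/-- Euclidean norm of a vector given as a tuple. -/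
noncomputable def vnorm {ι : Type*} [Fintype ι] (v : ι → ℝ) : ℝ :=
  Real.sqrt (∑ a, v a ^ 2)

/-- `Ω ⊆ ℝⁿ` is a (nonempty, open, connected) Lipschitz domain: every boundary point has
a neighbourhood on which `Ω` can be flattened to a half space by a bi-Lipschitz map. -/
def IsLipschitzDomain {n : ℕ} (Ω : Set (EVec n)) : Prop :=
  IsOpen Ω ∧ Ω.Nonempty ∧ IsConnected Ω ∧
  ∀ x ∈ frontier Ω, ∃ (U : Set (EVec n)) (h hinv : EVec n → EVec n) (K : NNReal)
      (e : EVec n),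
    ‖e‖ = 1 ∧ IsOpen U ∧ x ∈ U ∧ LipschitzOnWith K h U ∧
    LipschitzOnWith K hinv (h '' U) ∧ (∀ y ∈ U, hinv (h y) = y) ∧
    h '' (U ∩ Ω) = (h '' U) ∩ {y : EVec n | 0 < ⟪e, y⟫}

/-- `Du` is the weak (distributional) gradient of `u` on `Ω`, and both are integrable;
i.e. `u ∈ W^{1,1}(Ω; ℝ^ι)` with weak gradient `Du`. -/
def HasWeakDerivOn {n : ℕ} {ι : Type*} [Fintype ι] (Ω : Set (EVec n))
    (u : EVec n → ι → ℝ) (Du : EVec n → ι → Fin n → ℝ) : Prop :=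
  IntegrableOn u Ω volume ∧ IntegrableOn Du Ω volume ∧
  ∀ φ : EVec n → ℝ, ContDiff ℝ 1 φ → HasCompactSupport φ → tsupport φ ⊆ Ω →
    ∀ (a : ι) (i : Fin n),
      ∫ x in Ω, u x a * fderiv ℝ φ x (EuclideanSpace.single i 1) =
        - ∫ x in Ω, Du x a i * φ x

/-- `u ∈ W^{1,2}(Ω;ℝ^ι)` with weak gradient `Du`. -/
def MemW12 {n : ℕ} {ι : Type*} [Fintype ι] (Ω : Set (EVec n))
    (u : EVec n → ι → ℝ) (Du : EVec n → ι → Fin n → ℝ) : Prop :=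
  HasWeakDerivOn Ω u Du ∧ IntegrableOn (fun x => vnorm (u x) ^ 2) Ω volume ∧
    IntegrableOn (fun x => mnorm (Du x) ^ 2) Ω volume

/-- vanishing mean value `(u)_Ω = 0`. -/
def ZeroMean {n : ℕ} {ι : Type*} [Fintype ι] (Ω : Set (EVec n))
    (u : EVec n → ι → ℝ) : Prop :=
  ∀ a : ι, ∫ x in Ω, u x a = 0

/-- The `L^∞(Ω)` norm of a matrix field (w.r.t. the pointwise Frobenius norm). -/
noncomputable def linfNormOn {n N : ℕ} (Ω : Set (EVec n))
    (T : EVec n → Fin N → Fin n → ℝ) : ℝ≥0∞ :=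
  essSup (fun x => ENNReal.ofReal (mnorm (T x))) (volume.restrict Ω)

/-- `T ∈ W^{1,∞}(Ω)`: bounded and Lipschitz on `Ω`. -/
def MemW1inf {n N : ℕ} (Ω : Set (EVec n)) (T : EVec n → Fin N → Fin n → ℝ) : Prop :=
  ∃ C : NNReal, (∀ x ∈ Ω, ‖T x‖ ≤ C) ∧ LipschitzOnWith C T Ω

/-- `T ∈ W^{2,∞}(Ω)`: `T` is bounded with bounded Lipschitz derivative on `Ω`. -/
def MemW2inf {n N : ℕ} (Ω : Set (EVec n)) (T : EVec n → Fin N → Fin n → ℝ) : Prop :=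
  ∃ (C : NNReal) (DT : EVec n → EVec n →L[ℝ] (Fin N → Fin n → ℝ)),
    (∀ x ∈ Ω, ‖T x‖ ≤ C) ∧ (∀ x ∈ Ω, HasFDerivWithinAt T (DT x) Ω x) ∧
    (∀ x ∈ Ω, ‖DT x‖ ≤ C) ∧ LipschitzOnWith C DT Ω

/-- The nonlinear map `A(z) = f'(|z|) z / |z|` (equal to `0` at `z = 0`). -/
noncomputable def Amap {N n : ℕ} (f' : ℝ → ℝ) (z : Fin N → Fin n → ℝ) :
    Fin N → Fin n → ℝ :=
  fun a i => (f' (mnorm z) / mnorm z) * z a i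

/-- `u` is a weak solution of the Neumann problem for the integrand `f(|·|)` and datum `T₀`. -/
def IsWeakSolution {n N : ℕ} (Ω : Set (EVec n)) (f' : ℝ → ℝ)
    (T₀ : EVec n → Fin N → Fin n → ℝ)
    (u : EVec n → Fin N → ℝ) (Du : EVec n → Fin N → Fin n → ℝ) : Prop :=
  HasWeakDerivOn Ω u Du ∧
  ∀ φ Dφ, HasWeakDerivOn Ω φ Dφ →
    ∫ x in Ω, mdot (Amap f' (Du x)) (Dφ x) = ∫ x in Ω, mdot (T₀ x) (Dφ x)

/-- The functional `𝔉[w] = ∫_Ω (f(|∇w|) − T₀ · ∇w) dx` (as a function of the gradient). -/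
noncomputable def FF {n N : ℕ} (Ω : Set (EVec n)) (f : ℝ → ℝ)
    (T₀ : EVec n → Fin N → Fin n → ℝ) (Du : EVec n → Fin N → Fin n → ℝ) : ℝ :=
  ∫ x in Ω, (f (mnorm (Du x)) - mdot (T₀ x) (Du x))

/-- The regularised functional `𝔉_k[w] = 𝔉[w] + (2k)⁻¹ ∫_Ω |∇w|² dx`. -/
noncomputable def FFk {n N : ℕ} (Ω : Set (EVec n)) (f : ℝ → ℝ)
    (T₀ : EVec n → Fin N → Fin n → ℝ) (k : ℕ)
    (Du : EVec n → Fin N → Fin n → ℝ) : ℝ :=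
  FF Ω f T₀ Du + (2 * (k : ℝ))⁻¹ * ∫ x in Ω, mnorm (Du x) ^ 2

end

/-- Biting convergence: weak `L¹`-convergence on an exhausting sequence of subsets of
`Ω` whose complements have vanishing measure (Chacon). -/
def BitingConvTo {n N : ℕ} (Ω : Set (EVec n))
    (Ek : ℕ → EVec n → Fin N → Fin n → ℝ) (E : EVec n → Fin N → Fin n → ℝ) : Prop :=
  ∃ Ωj : ℕ → Set (EVec n),
    (∀ j, MeasurableSet (Ωj j) ∧ Ωj j ⊆ Ω) ∧ Monotone Ωj ∧
    Filter.Tendsto (fun j => volume (Ω \ Ωj j)) Filter.atTop (nhds 0) ∧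
    ∀ j, ∀ g : EVec n → Fin N → Fin n → ℝ,
      AEStronglyMeasurable g (volume.restrict (Ωj j)) →
      (∃ C : ℝ, ∀ x, mnorm (g x) ≤ C) →
      Filter.Tendsto (fun k => ∫ x in Ωj j, mdot (Ek k x) (g x)) Filter.atTop
        (nhds (∫ x in Ωj j, mdot (E x) (g x)))

section helpers
variable {N n : ℕ}

def Jm (z : Fin N → Fin n → ℝ) : EuclideanSpace ℝ (Fin N × Fin n) :=
  WithLp.toLp 2 (fun p => z p.1 p.2)

lemma mdot_eq (A B : Fin N → Fin n → ℝ) : mdot A B = ⟪Jm A, Jm B⟫ := by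
  simp only [mdot, Jm, PiLp.inner_apply, Fintype.sum_prod_type]
  refine Finset.sum_congr rfl fun a _ => Finset.sum_congr rfl fun i _ => ?_
  simp [mul_comm]

lemma mnorm_eq (A : Fin N → Fin n → ℝ) : mnorm A = ‖Jm A‖ := by
  rw [mnorm, mdot_eq, real_inner_self_eq_norm_sq, Real.sqrt_sq (norm_nonneg _)]

lemma mnorm_nonneg' (A : Fin N → Fin n → ℝ) : 0 ≤ mnorm A := Real.sqrt_nonneg _

lemma abs_mdot_le (A B : Fin N → Fin n → ℝ) : |mdot A B| ≤ mnorm A * mnorm B := by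
  rw [mdot_eq, mnorm_eq, mnorm_eq]; exact abs_real_inner_le_norm _ _

lemma norm_le_mnorm (A : Fin N → Fin n → ℝ) : ‖A‖ ≤ mnorm A := by
  refine (pi_norm_le_iff_of_nonneg (mnorm_nonneg' _)).2 fun a =>
    (pi_norm_le_iff_of_nonneg (mnorm_nonneg' _)).2 fun i => ?_
  rw [mnorm_eq]
  exact PiLp.norm_apply_le (Jm A) (a, i)

lemma aesm_mdot {X : Type*} [MeasurableSpace X] {μ : Measure X}
    {A B : X → Fin N → Fin n → ℝ} (hA : AEStronglyMeasurable A μ)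
    (hB : AEStronglyMeasurable B μ) : AEStronglyMeasurable (fun x => mdot (A x) (B x)) μ := by
  unfold mdot
  refine Finset.aestronglyMeasurable_fun_sum _ fun a _ =>
    Finset.aestronglyMeasurable_fun_sum _ fun i _ => ?_
  have hc : Continuous fun z : Fin N → Fin n → ℝ => z a i := by fun_prop
  exact (hc.comp_aestronglyMeasurable hA).mul (hc.comp_aestronglyMeasurable hB)

lemma tendsto_mdot {v : ℕ → Fin N → Fin n → ℝ} {E : Fin N → Fin n → ℝ}
    (h : Tendsto v atTop (𝓝 E)) (g : Fin N → Fin n → ℝ) :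
    Tendsto (fun l => mdot (v l) g) atTop (𝓝 (mdot E g)) := by
  have hc : Continuous fun z : Fin N → Fin n → ℝ => mdot z g := by unfold mdot; fun_prop
  exact (hc.tendsto E).comp h

lemma continuous_mnorm : Continuous (mnorm : (Fin N → Fin n → ℝ) → ℝ) := by
  unfold mnorm mdot; fun_prop

/-- average -/
noncomputable def avg (z w : Fin N → Fin n → ℝ) : Fin N → Fin n → ℝ := (1/2 : ℝ) • (z + w)

lemma Jm_avg (z w : Fin N → Fin n → ℝ) : Jm (avg z w) = (1/2 : ℝ) • (Jm z + Jm w) := by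
  ext p; simp [Jm, avg]; ring

lemma mnorm_avg_le (z w : Fin N → Fin n → ℝ) : mnorm (avg z w) ≤ (mnorm z + mnorm w) / 2 := by
  simp only [mnorm_eq, Jm_avg, norm_smul]
  have := norm_add_le (Jm z) (Jm w)
  norm_num; linarith

lemma mnorm_avg_sq (z w : Fin N → Fin n → ℝ) :
    mnorm (avg z w) ^ 2 = mnorm z ^ 2 / 2 + mnorm w ^ 2 / 2 - ‖Jm z - Jm w‖ ^ 2 / 4 := by
  simp only [mnorm_eq, Jm_avg, norm_smul, mul_pow]
  have := parallelogram_law_with_norm ℝ (Jm z) (Jm w)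
  norm_num; nlinarith

lemma mdot_avg (T z w : Fin N → Fin n → ℝ) :
    mdot T (avg z w) = mdot T z / 2 + mdot T w / 2 := by
  simp only [mdot_eq, Jm_avg, inner_smul_right, inner_add_right]; ring

noncomputable def gap (f : ℝ → ℝ) (z w : Fin N → Fin n → ℝ) : ℝ :=
  f (mnorm z) / 2 + f (mnorm w) / 2 - f (mnorm (avg z w))

lemma Jm_inj {z w : Fin N → Fin n → ℝ} (h : Jm z = Jm w) : z = w := by
  funext a i
  exact congrArg (fun v : EuclideanSpace ℝ (Fin N × Fin n) => v (a, i)) h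

lemma f_nonneg {f f' : ℝ → ℝ}
    (hderiv : ∀ t ∈ Set.Ici (0:ℝ), HasDerivWithinAt f (f' t) (Set.Ici 0) t)
    (hstrict : StrictConvexOn ℝ (Set.Ici 0) f)
    (hf0 : f 0 = 0) (hf'0 : f' 0 = 0) {t : ℝ} (ht : 0 ≤ t) : 0 ≤ f t := by
  rcases ht.eq_or_lt with rfl | h
  · rw [hf0]
  have h1 := hstrict.convexOn.le_slope_of_hasDerivWithinAt (x := 0) (y := t) (by simp) ht h
    (hderiv 0 (by simp))
  rw [hf'0, slope_def_field, hf0, sub_zero, sub_zero] at h1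
  by_contra hc
  exact absurd h1 (not_le.2 (div_neg_of_neg_of_pos (not_le.1 hc) h))

lemma f_strictMono {f f' : ℝ → ℝ}
    (hderiv : ∀ t ∈ Set.Ici (0:ℝ), HasDerivWithinAt f (f' t) (Set.Ici 0) t)
    (hstrict : StrictConvexOn ℝ (Set.Ici 0) f)
    (hf0 : f 0 = 0) (hf'0 : f' 0 = 0) {s t : ℝ} (hs : 0 ≤ s) (hst : s < t) : f s < f t := by
  have key : ∀ t, 0 < t → ∀ s, 0 < s → s < t → f s < (s / t) * f t := by
    intro t ht s hs hst
    have := hstrict.2 (Set.self_mem_Ici (a := (0:ℝ))) (show t ∈ Set.Ici 0 from ht.le) ht.ne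
      (show 0 < 1 - s / t by rw [sub_pos, div_lt_one ht]; exact hst) (show 0 < s / t by positivity)
      (by ring)
    simpa [hf0, ht.ne'] using this
  have ht : 0 < t := hs.trans_lt hst
  have hpos : 0 < f t := by
    have h1 := key t ht (t/2) (by positivity) (by linarith)
    have h2 := f_nonneg hderiv hstrict hf0 hf'0 (t := t/2) (by positivity)
    have h3 : t / 2 / t = 1/2 := by field_simp
    rw [h3] at h1
    linarith
  rcases hs.eq_or_lt with rfl | hs
  · rwa [hf0]
  · refine (key t ht s hs hst).trans ?_
    have : s / t < 1 := (div_lt_one ht).2 hst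
    nlinarith

lemma gap_nonneg_pos {f f' : ℝ → ℝ}
    (hderiv : ∀ t ∈ Set.Ici (0:ℝ), HasDerivWithinAt f (f' t) (Set.Ici 0) t)
    (hstrict : StrictConvexOn ℝ (Set.Ici 0) f)
    (hf0 : f 0 = 0) (hf'0 : f' 0 = 0) {z w : Fin N → Fin n → ℝ} (hzw : z ≠ w) :
    0 < gap f z w := by
  have mono : ∀ s t, 0 ≤ s → s ≤ t → f s ≤ f t := by
    intro s t hs hst
    rcases hst.eq_or_lt with rfl | h
    · exact le_rfl
    · exact (f_strictMono hderiv hstrict hf0 hf'0 hs h).le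
  unfold gap
  by_cases h : mnorm z = mnorm w
  · have h1 := mnorm_avg_sq z w
    have h2 : 0 < ‖Jm z - Jm w‖ := norm_pos_iff.2 (sub_ne_zero.2 fun h => hzw (Jm_inj h))
    have h3 : mnorm (avg z w) < mnorm z := by
      apply lt_of_pow_lt_pow_left₀ 2 (mnorm_nonneg' _)
      rw [h1, ← h]; nlinarith [sq_pos_of_pos h2]
    have := f_strictMono hderiv hstrict hf0 hf'0 (mnorm_nonneg' _) h3
    rw [← h]; linarith
  · have h1 := hstrict.2 (show mnorm z ∈ Set.Ici 0 from mnorm_nonneg' z)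
      (show mnorm w ∈ Set.Ici 0 from mnorm_nonneg' w) h
      (show (0:ℝ) < 1/2 by norm_num) (show (0:ℝ) < 1/2 by norm_num) (by norm_num)
    have h2 := mono _ _ (mnorm_nonneg' _) (mnorm_avg_le z w)
    simp only [smul_eq_mul] at h1
    have h3 : (mnorm z + mnorm w) / 2 = 1/2 * mnorm z + 1/2 * mnorm w := by ring
    rw [h3] at h2
    linarith

lemma avg_self (z : Fin N → Fin n → ℝ) : avg z z = z := by
  ext a i; simp [avg]; ring

lemma gap_nonneg {f f' : ℝ → ℝ}
    (hderiv : ∀ t ∈ Set.Ici (0:ℝ), HasDerivWithinAt f (f' t) (Set.Ici 0) t)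
    (hstrict : StrictConvexOn ℝ (Set.Ici 0) f)
    (hf0 : f 0 = 0) (hf'0 : f' 0 = 0) (z w : Fin N → Fin n → ℝ) :
    0 ≤ gap f z w := by
  by_cases h : z = w
  · subst h; rw [gap, avg_self]; linarith
  · exact (gap_nonneg_pos hderiv hstrict hf0 hf'0 h).le

lemma continuous_f_mnorm {f f' : ℝ → ℝ}
    (hderiv : ∀ t ∈ Set.Ici (0:ℝ), HasDerivWithinAt f (f' t) (Set.Ici 0) t) :
    Continuous fun z : Fin N → Fin n → ℝ => f (mnorm z) := by
  have : ContinuousOn f (Set.Ici 0) := fun t ht => (hderiv t ht).continuousWithinAt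
  exact this.comp_continuous continuous_mnorm mnorm_nonneg'

lemma continuous_avg : Continuous fun p : (Fin N → Fin n → ℝ) × (Fin N → Fin n → ℝ) =>
    avg p.1 p.2 := by
  unfold avg; fun_prop

lemma continuous_gap {f f' : ℝ → ℝ}
    (hderiv : ∀ t ∈ Set.Ici (0:ℝ), HasDerivWithinAt f (f' t) (Set.Ici 0) t) :
    Continuous fun p : (Fin N → Fin n → ℝ) × (Fin N → Fin n → ℝ) => gap f p.1 p.2 := by
  have h := continuous_f_mnorm (N := N) (n := n) hderiv
  unfold gap
  exact (((h.comp continuous_fst).div_const 2).add ((h.comp continuous_snd).div_const 2)).sub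
    (h.comp continuous_avg)

lemma gap_compact {f f' : ℝ → ℝ}
    (hderiv : ∀ t ∈ Set.Ici (0:ℝ), HasDerivWithinAt f (f' t) (Set.Ici 0) t)
    (hstrict : StrictConvexOn ℝ (Set.Ici 0) f)
    (hf0 : f 0 = 0) (hf'0 : f' 0 = 0) (M ε : ℝ) (hε : 0 < ε) :
    ∃ δ > 0, ∀ z w : Fin N → Fin n → ℝ, mnorm z ≤ M → mnorm w ≤ M → ε ≤ dist z w →
      δ ≤ gap f z w := by
  let K : Set ((Fin N → Fin n → ℝ) × (Fin N → Fin n → ℝ)) :=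
    {p | mnorm p.1 ≤ M ∧ mnorm p.2 ≤ M ∧ ε ≤ dist p.1 p.2}
  have hK : IsCompact K := by
    apply IsCompact.of_isClosed_subset
      ((isCompact_closedBall (0 : Fin N → Fin n → ℝ) M).prod
        (isCompact_closedBall (0 : Fin N → Fin n → ℝ) M))
    · exact (isClosed_le (continuous_mnorm.comp continuous_fst) continuous_const).inter
        ((isClosed_le (continuous_mnorm.comp continuous_snd) continuous_const).inter
          (isClosed_le continuous_const continuous_dist))
    · rintro ⟨z, w⟩ ⟨h1, h2, -⟩
      simp only [Set.mem_prod, mem_closedBall_zero_iff]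
      exact ⟨(norm_le_mnorm _).trans h1, (norm_le_mnorm _).trans h2⟩
  rcases K.eq_empty_or_nonempty with he | hne
  · refine ⟨1, one_pos, fun z w h1 h2 h3 => ?_⟩
    have : (z, w) ∈ K := ⟨h1, h2, h3⟩
    simp [he] at this
  · obtain ⟨p, hp, hmin⟩ := hK.exists_isMinOn hne (continuous_gap hderiv).continuousOn
    refine ⟨gap f p.1 p.2, gap_nonneg_pos hderiv hstrict hf0 hf'0 ?_, fun z w h1 h2 h3 => ?_⟩
    · intro h
      have := hp.2.2
      rw [h, dist_self] at this; linarith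
    · have hm : (z, w) ∈ K := ⟨h1, h2, h3⟩
      exact isMinOn_iff.1 hmin (z, w) hm

end helpers

section helpersB
variable {N n : ℕ}

lemma exists_cauchy_subseq {X : Type*} [MeasurableSpace X] (μ : Measure X) [IsFiniteMeasure μ]
    {f f' : ℝ → ℝ}
    (hderiv : ∀ t ∈ Set.Ici (0:ℝ), HasDerivWithinAt f (f' t) (Set.Ici 0) t)
    (hstrict : StrictConvexOn ℝ (Set.Ici 0) f)
    (hf0 : f 0 = 0) (hf'0 : f' 0 = 0)
    (v : ℕ → X → Fin N → Fin n → ℝ) (B : ℝ)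
    (hint : ∀ k, Integrable (fun x => mnorm (v k x)) μ)
    (hB : ∀ k, ∫ x, mnorm (v k x) ∂μ ≤ B)
    (a : ℕ → ℝ) (ha : CauchySeq a)
    (hgi : ∀ k l, Integrable (fun x => gap f (v k x) (v l x)) μ)
    (hg : ∀ k l, k ≤ l → ∫ x, gap f (v k x) (v l x) ∂μ ≤ a k - a l) :
    ∃ φ : ℕ → ℕ, StrictMono φ ∧ ∀ᵐ x ∂μ, CauchySeq fun l => v (φ l) x := by
  have hB0 : 0 ≤ B := (integral_nonneg fun x => mnorm_nonneg' _).trans (hB 0)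
  have key : ∀ j : ℕ, ∀ᶠ k in atTop, ∀ l, k ≤ l →
      μ.real {x | (1/2:ℝ)^j ≤ dist (v k x) (v l x)} ≤ 3 * (1/2:ℝ)^j := by
    intro j
    set e : ℝ := (1/2:ℝ)^j with he
    have hepos : 0 < e := by positivity
    set M : ℝ := (B + 1) / e with hM
    have hMpos : 0 < M := by positivity
    obtain ⟨δ, hδ, hδ'⟩ := gap_compact (N := N) (n := n) hderiv hstrict hf0 hf'0 M e hepos
    obtain ⟨K, hK⟩ := Metric.cauchySeq_iff.1 ha (δ * e) (by positivity)
    filter_upwards [eventually_ge_atTop K] with k hk l hkl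
    have hm : ∀ k, μ.real {x | M ≤ mnorm (v k x)} ≤ e := by
      intro k
      have h1 := mul_meas_ge_le_integral_of_nonneg
        (ae_of_all μ fun x => mnorm_nonneg' (v k x)) (hint k) M
      have h2 : M * μ.real {x | M ≤ mnorm (v k x)} ≤ M * e := by
        refine h1.trans ((hB k).trans ?_)
        rw [hM, div_mul_cancel₀ _ hepos.ne']; linarith
      exact le_of_mul_le_mul_left h2 hMpos
    have hgm : μ.real {x | δ ≤ gap f (v k x) (v l x)} ≤ e := by
      have h1 := mul_meas_ge_le_integral_of_nonneg
        (ae_of_all μ fun x => gap_nonneg hderiv hstrict hf0 hf'0 (v k x) (v l x)) (hgi k l) δ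
      have h3 := hK k hk l (le_trans hk hkl)
      rw [Real.dist_eq] at h3
      exact le_of_mul_le_mul_left
        (h1.trans ((hg k l hkl).trans ((le_abs_self _).trans h3.le))) hδ
    have hsub : {x | e ≤ dist (v k x) (v l x)} ⊆
        ({x | M ≤ mnorm (v k x)} ∪ {x | M ≤ mnorm (v l x)}) ∪
          {x | δ ≤ gap f (v k x) (v l x)} := by
      intro x hx
      by_cases h1 : M ≤ mnorm (v k x)
      · exact Or.inl (Or.inl h1)
      by_cases h2 : M ≤ mnorm (v l x)
      · exact Or.inl (Or.inr h2)
      exact Or.inr (hδ' _ _ (not_le.1 h1).le (not_le.1 h2).le hx)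
    have h4 := measureReal_mono (μ := μ) hsub
    have h5 := measureReal_union_le (μ := μ)
      ({x | M ≤ mnorm (v k x)} ∪ {x | M ≤ mnorm (v l x)}) {x | δ ≤ gap f (v k x) (v l x)}
    have h6 := measureReal_union_le (μ := μ) {x | M ≤ mnorm (v k x)} {x | M ≤ mnorm (v l x)}
    linarith [hm k, hm l]
  obtain ⟨φ, hφ, hφ'⟩ := extraction_forall_of_eventually key
  refine ⟨φ, hφ, ?_⟩
  have hs : Summable fun j : ℕ => (1/2:ℝ)^j :=
    summable_geometric_of_lt_one (by norm_num) (by norm_num)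
  have hfin : ∑' j, μ {x | (1/2:ℝ)^j ≤ dist (v (φ j) x) (v (φ (j+1)) x)} ≠ ∞ := by
    have h1 : ∀ j, μ {x | (1/2:ℝ)^j ≤ dist (v (φ j) x) (v (φ (j+1)) x)} ≤
        ENNReal.ofReal (3 * (1/2:ℝ)^j) := by
      intro j
      rw [← ofReal_measureReal]
      exact ENNReal.ofReal_le_ofReal (hφ' j _ (hφ (Nat.lt_succ_self j)).le)
    exact ne_top_of_le_ne_top (hs.mul_left 3).tsum_ofReal_ne_top (ENNReal.tsum_le_tsum h1)
  filter_upwards [ae_eventually_notMem hfin] with x hx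
  refine cauchySeq_of_summable_dist (Summable.of_norm_bounded_eventually_nat hs ?_)
  filter_upwards [hx] with j hj
  rw [Real.norm_of_nonneg dist_nonneg]
  exact (not_le.1 hj).le

lemma biting_of_ae (Ω : Set (EVec n)) (hΩ : MeasurableSet Ω) (hfin : volume Ω ≠ ∞)
    (v : ℕ → EVec n → Fin N → Fin n → ℝ) (B : ℝ)
    (hv : ∀ k, AEStronglyMeasurable (v k) (volume.restrict Ω))
    (hint : ∀ k, Integrable (fun x => mnorm (v k x)) (volume.restrict Ω))
    (hB : ∀ k, ∫ x in Ω, mnorm (v k x) ≤ B)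
    (hc : ∀ᵐ x ∂(volume.restrict Ω), CauchySeq fun l => v l x) :
    ∃ E : EVec n → Fin N → Fin n → ℝ, IntegrableOn E Ω volume ∧ BitingConvTo Ω v E ∧
      ∀ᵐ x ∂(volume.restrict Ω), Tendsto (fun l => v l x) atTop (𝓝 (E x)) := by
  obtain ⟨E, hEm, hE⟩ := exists_stronglyMeasurable_limit_of_tendsto_ae hv
    (hc.mono fun x hx => cauchySeq_tendsto_of_complete hx)
  refine ⟨E, ⟨hEm.aestronglyMeasurable, ?_⟩, ?_, hE⟩
  · have h1 : ∫⁻ x in Ω, ‖E x‖ₑ ≤ ENNReal.ofReal B := by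
      calc ∫⁻ x in Ω, ‖E x‖ₑ = ∫⁻ x in Ω, liminf (fun l => ‖v l x‖ₑ) atTop := by
            refine lintegral_congr_ae (hE.mono fun x hx => ?_)
            exact (hx.enorm.liminf_eq).symm
        _ ≤ liminf (fun l => ∫⁻ x in Ω, ‖v l x‖ₑ) atTop :=
            lintegral_liminf_le' fun l => (hv l).enorm
        _ ≤ ENNReal.ofReal B := by
            refine liminf_le_of_frequently_le' (Frequently.of_forall fun l => ?_)
            calc ∫⁻ x in Ω, ‖v l x‖ₑ ≤ ∫⁻ x in Ω, ENNReal.ofReal (mnorm (v l x)) := by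
                  refine lintegral_mono fun x => ?_
                  rw [← ofReal_norm]
                  exact ENNReal.ofReal_le_ofReal (norm_le_mnorm _)
              _ = ENNReal.ofReal (∫ x in Ω, mnorm (v l x)) :=
                  (ofReal_integral_eq_lintegral_ofReal (hint l)
                    (ae_of_all _ fun x => mnorm_nonneg' _)).symm
              _ ≤ _ := ENNReal.ofReal_le_ofReal (hB l)
    exact h1.trans_lt ENNReal.ofReal_lt_top
  · let S : ℕ → Set (EVec n) := fun j => Ω ∩ {x | ∀ l, mnorm ((hv l).mk (v l) x) ≤ j}
    have hSm : ∀ j, MeasurableSet (S j) := by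
      intro j
      refine hΩ.inter ?_
      rw [ofPred_forall]
      refine MeasurableSet.iInter fun l => ?_
      exact measurableSet_le (continuous_mnorm.measurable.comp
        (hv l).stronglyMeasurable_mk.measurable) measurable_const
    have hSmono : Monotone S := by
      intro i j hij x hx
      exact ⟨hx.1, fun l => (hx.2 l).trans (by exact_mod_cast hij)⟩
    have hmk : ∀ᵐ x ∂(volume.restrict Ω), ∀ l, v l x = (hv l).mk (v l) x :=
      ae_all_iff.2 fun l => (hv l).ae_eq_mk
    refine ⟨S, fun j => ⟨hSm j, inter_subset_left⟩, hSmono, ?_, ?_⟩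
    · have h0 : volume (⋂ j, Ω \ S j) = 0 := by
        have h1 : ∀ᵐ x ∂(volume.restrict Ω), ∃ j, x ∈ S j := by
          filter_upwards [hE, hmk, ae_restrict_mem hΩ] with x hx hx' hxΩ
          obtain ⟨C, hC⟩ := ((continuous_mnorm.tendsto _).comp hx).bddAbove_range
          obtain ⟨j, hj⟩ := exists_nat_ge C
          refine ⟨j, hxΩ, fun l => ?_⟩
          rw [← hx' l]
          exact (hC ⟨l, rfl⟩).trans hj
        rw [ae_restrict_iff' hΩ, ae_iff] at h1
        refine measure_mono_null (fun x hx => ?_) h1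
        rw [mem_iInter] at hx
        intro h
        obtain ⟨j, hj⟩ := h (hx 0).1
        exact (hx j).2 hj
      rw [← h0]
      refine tendsto_measure_iInter_atTop (fun j => (hΩ.diff (hSm j)).nullMeasurableSet) ?_
        ⟨0, ne_top_of_le_ne_top hfin (measure_mono sdiff_subset)⟩
      exact fun i j hij => sdiff_subset_sdiff_right (hSmono hij)
    · rintro j g hg ⟨C, hC⟩
      have hle : volume.restrict (S j) ≤ volume.restrict Ω :=
        Measure.restrict_mono_set _ inter_subset_left
      have : IsFiniteMeasure (volume.restrict (S j)) :=
        ⟨by rw [Measure.restrict_apply_univ]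
            exact (measure_mono inter_subset_left).trans_lt hfin.lt_top⟩
      refine tendsto_integral_of_dominated_convergence (fun _ => j * C) (fun k => ?_)
        (integrable_const _) (fun k => ?_) ?_
      · exact aesm_mdot ((hv k).mono_measure hle) hg
      · filter_upwards [ae_mono hle hmk, ae_restrict_mem (hSm j)] with x hx hxS
        rw [Real.norm_eq_abs]
        refine (abs_mdot_le _ _).trans ?_
        have := hxS.2 k
        rw [← hx k] at this
        exact mul_le_mul this (hC x) (mnorm_nonneg' _) (Nat.cast_nonneg j)
      · filter_upwards [ae_mono hle hE] with x hx
        exact tendsto_mdot hx (g x)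

end helpersB

section helpersC
variable {N n : ℕ}

lemma integrable_comp1 {Ω : Set (EVec n)} {u : EVec n → Fin N → ℝ} (h : IntegrableOn u Ω volume)
    (a : Fin N) : IntegrableOn (fun x => u x a) Ω volume :=
  (ContinuousLinearMap.proj (R := ℝ) (φ := fun _ : Fin N => ℝ) a).integrable_comp h

lemma integrable_comp2 {Ω : Set (EVec n)} {u : EVec n → Fin N → Fin n → ℝ}
    (h : IntegrableOn u Ω volume) (a : Fin N) (i : Fin n) :
    IntegrableOn (fun x => u x a i) Ω volume := by
  have h1 : IntegrableOn (fun x => u x a) Ω volume :=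
    (ContinuousLinearMap.proj (R := ℝ) (φ := fun _ : Fin N => (Fin n → ℝ)) a).integrable_comp h
  exact (ContinuousLinearMap.proj (R := ℝ) (φ := fun _ : Fin n => ℝ) i).integrable_comp h1

lemma integrable_mul_cpt {Ω : Set (EVec n)} {g ψ : EVec n → ℝ} (hg : IntegrableOn g Ω volume)
    (hψ : Continuous ψ) (hc : HasCompactSupport ψ) :
    IntegrableOn (fun x => g x * ψ x) Ω volume := by
  obtain ⟨C, hC⟩ := hψ.bounded_above_of_compact_support hc
  exact Integrable.mul_bdd (c := C) hg hψ.aestronglyMeasurable (ae_of_all _ hC)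

lemma weak_avg {Ω : Set (EVec n)} {u v : EVec n → Fin N → ℝ} {Du Dv : EVec n → Fin N → Fin n → ℝ}
    (hu : HasWeakDerivOn Ω u Du) (hv : HasWeakDerivOn Ω v Dv) :
    HasWeakDerivOn Ω (fun x => (1/2:ℝ) • (u x + v x)) (fun x => avg (Du x) (Dv x)) := by
  refine ⟨(hu.1.add hv.1).smul (1/2:ℝ), (hu.2.1.add hv.2.1).smul (1/2:ℝ), ?_⟩
  intro φ hφ hc hs a i
  have e1 := hu.2.2 φ hφ hc hs a i
  have e2 := hv.2.2 φ hφ hc hs a i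
  have hψ : Continuous fun x => fderiv ℝ φ x (EuclideanSpace.single i 1) :=
    (hφ.continuous_fderiv one_ne_zero).clm_apply continuous_const
  have hψc : HasCompactSupport fun x => fderiv ℝ φ x (EuclideanSpace.single i 1) :=
    hc.fderiv_apply ℝ _
  have i1 := integrable_mul_cpt (integrable_comp1 hu.1 a) hψ hψc
  have i2 := integrable_mul_cpt (integrable_comp1 hv.1 a) hψ hψc
  have j1 := integrable_mul_cpt (integrable_comp2 hu.2.1 a i) hφ.continuous hc
  have j2 := integrable_mul_cpt (integrable_comp2 hv.2.1 a i) hφ.continuous hc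
  have l1 : ∫ x in Ω, ((1/2:ℝ) • (u x + v x)) a * fderiv ℝ φ x (EuclideanSpace.single i 1) =
      (1/2) * (∫ x in Ω, u x a * fderiv ℝ φ x (EuclideanSpace.single i 1)) +
      (1/2) * ∫ x in Ω, v x a * fderiv ℝ φ x (EuclideanSpace.single i 1) := by
    rw [← integral_const_mul, ← integral_const_mul, ← integral_add (i1.const_mul _) (i2.const_mul _)]
    refine integral_congr_ae (ae_of_all _ fun x => ?_)
    simp only [Pi.smul_apply, Pi.add_apply, smul_eq_mul]; ring
  have l2 : ∫ x in Ω, avg (Du x) (Dv x) a i * φ x =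
      (1/2) * (∫ x in Ω, Du x a i * φ x) + (1/2) * ∫ x in Ω, Dv x a i * φ x := by
    rw [← integral_const_mul, ← integral_const_mul, ← integral_add (j1.const_mul _) (j2.const_mul _)]
    refine integral_congr_ae (ae_of_all _ fun x => ?_)
    simp only [avg, Pi.smul_apply, Pi.add_apply, smul_eq_mul]; ring
  rw [l1, l2, e1, e2]; ring

lemma vnorm_sq {ι : Type*} [Fintype ι] (v : ι → ℝ) : vnorm v ^ 2 = ∑ a, v a ^ 2 :=
  Real.sq_sqrt (Finset.sum_nonneg fun _ _ => sq_nonneg _)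

lemma mem_avg {Ω : Set (EVec n)} {u v : EVec n → Fin N → ℝ} {Du Dv : EVec n → Fin N → Fin n → ℝ}
    (hu : MemW12 Ω u Du) (hv : MemW12 Ω v Dv) :
    MemW12 Ω (fun x => (1/2:ℝ) • (u x + v x)) (fun x => avg (Du x) (Dv x)) := by
  have hw := weak_avg hu.1 hv.1
  refine ⟨hw, ?_, ?_⟩
  · refine Integrable.mono' (hu.2.1.add hv.2.1) ?_ (ae_of_all _ fun x => ?_)
    · have hc : Continuous fun z : Fin N → ℝ => vnorm z ^ 2 := by unfold vnorm; fun_prop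
      exact hc.comp_aestronglyMeasurable hw.1.aestronglyMeasurable
    · rw [Real.norm_of_nonneg (sq_nonneg _)]
      simp only [Pi.add_apply, vnorm_sq, ← Finset.sum_add_distrib]
      refine Finset.sum_le_sum fun a _ => ?_
      simp only [Pi.smul_apply, Pi.add_apply, smul_eq_mul]
      nlinarith [sq_nonneg (u x a - v x a), sq_nonneg (u x a), sq_nonneg (v x a)]
  · refine Integrable.mono' (hu.2.2.add hv.2.2) ?_ (ae_of_all _ fun x => ?_)
    · exact (continuous_mnorm.pow 2).comp_aestronglyMeasurable hw.2.1.aestronglyMeasurable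
    · rw [Real.norm_of_nonneg (sq_nonneg _), mnorm_avg_sq]
      simp only [Pi.add_apply]
      nlinarith [sq_nonneg ‖Jm (Du x) - Jm (Dv x)‖, sq_nonneg (mnorm (Du x)),
        sq_nonneg (mnorm (Dv x))]

lemma mnorm_zero' : mnorm (fun (_ : Fin N) (_ : Fin n) => (0:ℝ)) = 0 := by
  simp [mnorm, mdot]

lemma mem_zero (Ω : Set (EVec n)) :
    MemW12 Ω (fun _ _ => (0:ℝ)) (fun _ (_ : Fin N) _ => (0:ℝ)) := by
  refine ⟨⟨integrableOn_zero, integrableOn_zero, ?_⟩, ?_, ?_⟩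
  · intro φ _ _ _ a i; simp
  · simp [vnorm]
  · simp [mnorm_zero']

end helpersC

section helpersD
variable {N n : ℕ}

lemma exists_tau (Ω : Set (EVec n)) (T₀ : EVec n → Fin N → Fin n → ℝ) (finf : ℝ)
    (h : linfNormOn Ω T₀ < ENNReal.ofReal finf) :
    ∃ τ, 0 ≤ τ ∧ τ < finf ∧ ∀ᵐ x ∂(volume.restrict Ω), mnorm (T₀ x) ≤ τ := by
  have htop : linfNormOn Ω T₀ ≠ ∞ := (h.trans ENNReal.ofReal_lt_top).ne
  refine ⟨(linfNormOn Ω T₀).toReal, ENNReal.toReal_nonneg, ?_, ?_⟩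
  · by_contra hc
    have := ENNReal.ofReal_le_ofReal (not_lt.1 hc)
    rw [ENNReal.ofReal_toReal htop] at this
    exact absurd h (not_lt.2 this)
  · have := ENNReal.ae_le_essSup (μ := volume.restrict Ω)
      (fun x => ENNReal.ofReal (mnorm (T₀ x)))
    filter_upwards [this] with x hx
    exact (ENNReal.ofReal_le_iff_le_toReal htop).1 hx

lemma lower_bound {f : ℝ → ℝ} (hnn : ∀ t, 0 ≤ t → 0 ≤ f t) {finf σ : ℝ} (hσ : σ < finf)
    (hσ0 : 0 ≤ σ)
    (hfinf : Filter.Tendsto (fun t => f t / t) Filter.atTop (nhds finf)) :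
    ∃ C, 0 ≤ C ∧ ∀ t, 0 ≤ t → σ * t - C ≤ f t := by
  obtain ⟨R, hR⟩ := eventually_atTop.1 (hfinf.eventually (lt_mem_nhds hσ))
  refine ⟨σ * max R 1, by positivity, fun t ht => ?_⟩
  by_cases h : max R 1 ≤ t
  · have h1 := hR t ((le_max_left _ _).trans h)
    have h2 : 0 < t := lt_of_lt_of_le one_pos ((le_max_right _ _).trans h)
    rw [lt_div_iff₀ h2] at h1
    have : 0 ≤ σ * max R 1 := by positivity
    linarith
  · have := mul_le_mul_of_nonneg_left (not_le.1 h).le hσ0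
    linarith [hnn t ht]

lemma integral_gap_aux {X : Type*} [MeasurableSpace X] {μ : Measure X} {p q r : X → ℝ}
    (hp : Integrable p μ) (hq : Integrable q μ) (hr : Integrable r μ) :
    ∫ x, (p x / 2 + q x / 2 - r x) ∂μ =
      (∫ x, p x ∂μ) / 2 + (∫ x, q x ∂μ) / 2 - ∫ x, r x ∂μ := by
  have h : Integrable (fun x => p x / 2 + q x / 2) μ := (hp.div_const 2).add (hq.div_const 2)
  rw [integral_sub h hr, integral_add (hp.div_const 2) (hq.div_const 2), integral_div,
    integral_div]

end helpersD

/-- **Corollary 3.5 (pointwise convergence of the gradients).** Along a subsequence,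
the gradients `∇u_k` of the minimisers of the regularised functionals converge in the
biting sense weakly in `L¹` and `ℒⁿ`-a.e. in `Ω` to some `E ∈ L¹(Ω;ℝ^{N×n})`. -/
theorem gradients_biting_and_pointwise_convergence
    {n N : ℕ} (Ω : Set (EVec n))
    (hΩ : IsLipschitzDomain Ω) (hΩbdd : Bornology.IsBounded Ω)
    (ν L : ℝ) (hν : 0 < ν) (hνL : ν ≤ L)
    (f f' f'' : ℝ → ℝ)
    (hderiv : ∀ t ∈ Set.Ici (0:ℝ), HasDerivWithinAt f (f' t) (Set.Ici 0) t)
    (hderiv' : ∀ t ∈ Set.Ici (0:ℝ), HasDerivWithinAt f' (f'' t) (Set.Ici 0) t)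
    (hf''cont : ContinuousOn f'' (Set.Ici 0))
    (hstrict : StrictConvexOn ℝ (Set.Ici 0) f)
    (hf0 : f 0 = 0) (hf'0 : f' 0 = 0)
    (hgrowth : ∀ t ∈ Set.Ici (0:ℝ), ν * t - L ≤ f t ∧ f t ≤ L * (t + 1))
    (hsec : ∀ t ∈ Set.Ici (0:ℝ), f'' t ≤ L * (1 + t)⁻¹)
    (finf : ℝ) (hfinf : Filter.Tendsto (fun t => f t / t) Filter.atTop (nhds finf))
    (T₀ : EVec n → Fin N → Fin n → ℝ)
    (hT : MemW2inf Ω T₀)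
    (hTsmall : linfNormOn Ω T₀ < ENNReal.ofReal finf)
    (u : ℕ → EVec n → Fin N → ℝ) (Du : ℕ → EVec n → Fin N → Fin n → ℝ)
    (hmem : ∀ k, 0 < k → MemW12 Ω (u k) (Du k))
    (hzero : ∀ k, 0 < k → ZeroMean Ω (u k))
    (hmin : ∀ k, 0 < k →
      ∀ (w : EVec n → Fin N → ℝ) (Dw : EVec n → Fin N → Fin n → ℝ),
        MemW12 Ω w Dw → FFk Ω f T₀ k (Du k) ≤ FFk Ω f T₀ k Dw) :
    ∃ (E : EVec n → Fin N → Fin n → ℝ) (φ : ℕ → ℕ),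
      IntegrableOn E Ω volume ∧ StrictMono φ ∧
      BitingConvTo Ω (fun l => Du (φ l)) E ∧
      ∀ᵐ x ∂(volume.restrict Ω),
        Filter.Tendsto (fun l => Du (φ l) x) Filter.atTop (nhds (E x)) := by

  obtain ⟨hΩo, -⟩ := hΩ
  have hΩm : MeasurableSet Ω := hΩo.measurableSet
  have hfin : volume Ω ≠ ∞ := hΩbdd.measure_lt_top.ne
  have : IsFiniteMeasure (volume.restrict Ω) :=
    ⟨by rw [Measure.restrict_apply_univ]; exact hfin.lt_top⟩
  have hnn : ∀ t, 0 ≤ t → 0 ≤ f t := fun t ht => f_nonneg hderiv hstrict hf0 hf'0 ht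
  obtain ⟨τ, hτ0, hτf, hτ⟩ := exists_tau Ω T₀ finf hTsmall
  obtain ⟨σ, hσ1, hσ2⟩ := exists_between hτf
  obtain ⟨C, hC0, hC⟩ := lower_bound hnn hσ2 (hτ0.trans hσ1.le) hfinf
  have hTm : AEStronglyMeasurable T₀ (volume.restrict Ω) := by
    obtain ⟨_, DT, -, h, -⟩ := hT
    exact ContinuousOn.aestronglyMeasurable (fun x hx => (h x hx).continuousWithinAt) hΩm
  -- integrability facts
  have hmn : ∀ w Dw, MemW12 (ι := Fin N) Ω w Dw →
      Integrable (fun x => mnorm (Dw x)) (volume.restrict Ω) := by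
    intro w Dw h
    refine Integrable.mono' ((integrable_const (1:ℝ)).add h.2.2)
      (continuous_mnorm.comp_aestronglyMeasurable h.1.2.1.aestronglyMeasurable)
      (ae_of_all _ fun x => ?_)
    rw [Real.norm_of_nonneg (mnorm_nonneg' _)]
    simp only [Pi.add_apply]
    nlinarith [sq_nonneg (mnorm (Dw x) - 1), mnorm_nonneg' (Dw x)]
  have hfi : ∀ w Dw, MemW12 (ι := Fin N) Ω w Dw →
      Integrable (fun x => f (mnorm (Dw x))) (volume.restrict Ω) := by
    intro w Dw h
    refine Integrable.mono' (((hmn w Dw h).add (integrable_const (1:ℝ))).const_mul L)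
      ((continuous_f_mnorm hderiv).comp_aestronglyMeasurable h.1.2.1.aestronglyMeasurable)
      (ae_of_all _ fun x => ?_)
    rw [Real.norm_of_nonneg (hnn _ (mnorm_nonneg' _))]
    exact (hgrowth _ (mnorm_nonneg' _)).2
  have hTi : ∀ w Dw, MemW12 (ι := Fin N) Ω w Dw →
      Integrable (fun x => mdot (T₀ x) (Dw x)) (volume.restrict Ω) := by
    intro w Dw h
    refine Integrable.mono' ((hmn w Dw h).const_mul τ)
      (aesm_mdot hTm h.1.2.1.aestronglyMeasurable) ?_
    filter_upwards [hτ] with x hx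
    rw [Real.norm_eq_abs]
    exact (abs_mdot_le _ _).trans (mul_le_mul_of_nonneg_right hx (mnorm_nonneg' _))
  -- coercivity
  have hco : ∀ w Dw, MemW12 (ι := Fin N) Ω w Dw →
      (σ - τ) * ∫ x in Ω, mnorm (Dw x) ≤ FF Ω f T₀ Dw + C * volume.real Ω := by
    intro w Dw h
    have h1 : ∫ x in Ω, ((σ - τ) * mnorm (Dw x) - C) ≤ FF Ω f T₀ Dw := by
      refine integral_mono_ae (((hmn w Dw h).const_mul _).sub (integrable_const _))
        ((hfi w Dw h).sub (hTi w Dw h)) ?_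
      filter_upwards [hτ] with x hx
      have h2 := hC _ (mnorm_nonneg' (Dw x))
      have h3 := (le_abs_self _).trans ((abs_mdot_le (T₀ x) (Dw x)).trans
        (mul_le_mul_of_nonneg_right hx (mnorm_nonneg' _)))
      linarith
    rw [integral_sub ((hmn w Dw h).const_mul _) (integrable_const _), integral_const_mul,
      setIntegral_const, smul_eq_mul, mul_comm (volume.real Ω)] at h1
    linarith
  -- shifted sequence
  set v : ℕ → EVec n → Fin N → Fin n → ℝ := fun k => Du (k + 1) with hv
  have hvm : ∀ k, MemW12 Ω (u (k+1)) (v k) := fun k => hmem (k+1) k.succ_pos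
  set a : ℕ → ℝ := fun k => FFk Ω f T₀ (k+1) (v k) with ha
  have hsq : ∀ k : ℕ, 0 ≤ ∫ x in Ω, mnorm (v k x) ^ 2 := fun k =>
    integral_nonneg fun x => sq_nonneg _
  have hinv : ∀ k l : ℕ, k ≤ l →
      (2 * ((l + 1 : ℕ) : ℝ))⁻¹ ≤ (2 * ((k + 1 : ℕ) : ℝ))⁻¹ := by
    intro k l hkl
    gcongr
  have hinv0 : ∀ k : ℕ, 0 ≤ (2 * ((k + 1 : ℕ) : ℝ))⁻¹ := fun k => by positivity
  have hFa : ∀ k, FF Ω f T₀ (v k) ≤ a k := by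
    intro k
    have := mul_nonneg (hinv0 k) (hsq k)
    simp only [ha, FFk]; linarith
  have hstep : ∀ k l, k ≤ l → FFk Ω f T₀ (l+1) (v k) ≤ a k := by
    intro k l hkl
    have := mul_le_mul_of_nonneg_right (hinv k l hkl) (hsq k)
    simp only [ha, FFk]; linarith
  have hanti : Antitone a := fun k l hkl =>
    (hmin (l+1) l.succ_pos _ _ (hvm k)).trans (hstep k l hkl)
  have ha0 : ∀ k, a k ≤ 0 := by
    intro k
    refine (hmin (k+1) k.succ_pos _ _ (mem_zero Ω)).trans (le_of_eq ?_)
    simp [FFk, FF, mnorm_zero', hf0, mdot]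
  have hστ : 0 < σ - τ := sub_pos.2 hσ1
  have hvint : ∀ k, Integrable (fun x => mnorm (v k x)) (volume.restrict Ω) := fun k =>
    hmn _ _ (hvm k)
  have hbdd : BddBelow (range a) := by
    refine ⟨-(C * volume.real Ω), ?_⟩
    rintro _ ⟨k, rfl⟩
    have h1 := hco _ _ (hvm k)
    have h2 : 0 ≤ (σ - τ) * ∫ x in Ω, mnorm (v k x) :=
      mul_nonneg hστ.le (integral_nonneg fun x => mnorm_nonneg' _)
    linarith [hFa k]
  have hB : ∀ k, ∫ x in Ω, mnorm (v k x) ≤ C * volume.real Ω / (σ - τ) := by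
    intro k
    rw [le_div_iff₀ hστ, mul_comm]
    linarith [hco _ _ (hvm k), hFa k, ha0 k]
  have hcau : CauchySeq a := (tendsto_atTop_ciInf hanti hbdd).cauchySeq
  have hgi : ∀ k l, Integrable (fun x => gap f (v k x) (v l x)) (volume.restrict Ω) :=
    fun k l => (((hfi _ _ (hvm k)).div_const 2).add ((hfi _ _ (hvm l)).div_const 2)).sub
      (hfi _ _ (mem_avg (hvm k) (hvm l)))
  have hg : ∀ k l, k ≤ l → ∫ x in Ω, gap f (v k x) (v l x) ≤ a k - a l := by
    intro k l hkl
    have hm := mem_avg (hvm k) (hvm l)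
    have h1 := hmin (l+1) l.succ_pos _ _ hm
    have h2 : ∫ x in Ω, gap f (v k x) (v l x) = FF Ω f T₀ (v k) / 2 + FF Ω f T₀ (v l) / 2
        - FF Ω f T₀ (fun x => avg (v k x) (v l x)) := by
      have ik := (hfi _ _ (hvm k)).sub (hTi _ _ (hvm k))
      have il := (hfi _ _ (hvm l)).sub (hTi _ _ (hvm l))
      have im := (hfi _ _ hm).sub (hTi _ _ hm)
      have e : FF Ω f T₀ (v k) / 2 + FF Ω f T₀ (v l) / 2
        - FF Ω f T₀ (fun x => avg (v k x) (v l x)) =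
          ∫ x in Ω, ((f (mnorm (v k x)) - mdot (T₀ x) (v k x)) / 2 +
            (f (mnorm (v l x)) - mdot (T₀ x) (v l x)) / 2 -
            (f (mnorm (avg (v k x) (v l x))) - mdot (T₀ x) (avg (v k x) (v l x)))) := by
        exact (integral_gap_aux ik il im).symm
      rw [e]
      refine integral_congr_ae (ae_of_all _ fun x => ?_)
      simp only [gap, mdot_avg]; ring
    have h3 : ∫ x in Ω, mnorm (avg (v k x) (v l x)) ^ 2 ≤
        (∫ x in Ω, mnorm (v k x) ^ 2) / 2 + (∫ x in Ω, mnorm (v l x) ^ 2) / 2 := by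
      have ik : Integrable (fun x => mnorm (v k x) ^ 2) (volume.restrict Ω) := (hvm k).2.2
      have il : Integrable (fun x => mnorm (v l x) ^ 2) (volume.restrict Ω) := (hvm l).2.2
      rw [← integral_div, ← integral_div, ← integral_add (ik.div_const 2) (il.div_const 2)]
      refine integral_mono hm.2.2 ((ik.div_const 2).add (il.div_const 2)) fun x => ?_
      simp only [mnorm_avg_sq]
      nlinarith [sq_nonneg ‖Jm (v k x) - Jm (v l x)‖]
    have h4 := mul_le_mul_of_nonneg_left h3 (hinv0 l)
    have h5 := hstep k l hkl
    have h6 := hanti hkl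
    have h7 : a l = FFk Ω f T₀ (l+1) (v l) := rfl
    have h8 : FFk Ω f T₀ (l+1) (v l) ≤ FFk Ω f T₀ (l+1) (fun x => avg (v k x) (v l x)) := h1
    rw [h2]
    rw [← h7] at h8
    simp only [FFk] at h5 h7 h8
    linarith
  obtain ⟨φ, hφ, hc⟩ := exists_cauchy_subseq (volume.restrict Ω) hderiv hstrict hf0 hf'0 v _
    hvint hB a hcau hgi hg
  obtain ⟨E, hE1, hE2, hE3⟩ := biting_of_ae Ω hΩm hfin (fun l => v (φ l)) _
    (fun k => (hvm (φ k)).1.2.1.aestronglyMeasurable) (fun k => hvint (φ k))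
    (fun k => hB (φ k)) hc
  exact ⟨E, fun l => φ l + 1, hE1, fun i j hij => Nat.succ_lt_succ (hφ hij), hE2, hE3⟩
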